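/- Let H be a group and σ an automorphism of H with σ ∘ σ = id, and let G := H × H with automorphisms σ_G(x,y) := (σ(x), σ(y)), τ(x,y) := (y,x), and θ := σ_G ∘ τ. Fix (δ₁, δ₂) ∈ G and set γ := δ₁ · σ(δ₂)⁻¹. Then the set G_{(δ₁,δ₂)} := {(x, y) ∈ G^{σ_G} × G^θ : x⁻¹ · (δ₁,δ₂) · y = (δ₁,δ₂)} is a subgroup, every element of it has the form ((g₁,g₂), (g₃, σ(g₃))) with g₁, g₂ ∈ H^σ and g₃ ∈ H, and the map ((g₁,g₂), (g₃, σ(g₃))) ↦ (g₁, g₂) is a group isomorphism from G_{(δ₁,δ₂)} onto H_γ := {(g₁,g₂) ∈ H^σ × H^σ : g₁⁻¹ · γ · g₂ = γ}. -/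

import Mathlib

/-!
For subgroups `A`, `B` of a group `G` and `δ : G`, the equation `x⁻¹ * δ * y = δ` determines
`y = δ⁻¹ * x * δ` from `x`, so the first projection identifies the pairs `(x, y)` in `A × B` solving
it with `A ⊓ δ B δ⁻¹`. For `G = H × H`, `A = H^σ × H^σ`, `B` the graph of `σ` and `δ = (δ₁, δ₂)`,
the condition `(g₁, g₂) ∈ δ B δ⁻¹` reads `σ (δ₁⁻¹ * g₁ * δ₁) = δ₂⁻¹ * g₂ * δ₂`. If `g₂` is fixed by
`σ` and `δ₂ = σ ε`, the right-hand side is `σ (ε⁻¹ * g₂ * ε)`, and cancelling `σ` leaves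
`g₁ = γ * g₂ * γ⁻¹` with `γ = δ₁ * ε⁻¹`. When `σ` is an involution, `ε = σ δ₂`.
-/

open scoped Pointwise

section TwistedStabilizer

variable {G : Type*} [Group G]

/-- The stabilizer of `δ` under the action of `A × B` on `G` given by `(x, y) • g = x * g * y⁻¹`.
It is encoded as the part of the graph of `x ↦ δ⁻¹ * x * δ` lying in `A × B`, which makes it a
subgroup by construction. -/
def twistedStabilizer (A B : Subgroup G) (δ : G) : Subgroup (G × G) :=
  A.prod B ⊓ ((MulAut.conj δ)⁻¹).toMonoidHom.graph

variable {A B : Subgroup G} {δ : G}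

theorem conj_inv_eq_iff_inv_mul_mul_eq {x y : G} : δ⁻¹ * x * δ = y ↔ x⁻¹ * δ * y = δ := by
  rw [mul_assoc, inv_mul_eq_iff_eq_mul, mul_assoc, inv_mul_eq_iff_eq_mul, eq_comm]

theorem mem_twistedStabilizer {p : G × G} :
    p ∈ twistedStabilizer A B δ ↔ (p.1 ∈ A ∧ p.2 ∈ B) ∧ p.1⁻¹ * δ * p.2 = δ := by
  rw [twistedStabilizer, Subgroup.mem_inf, Subgroup.mem_prod, MonoidHom.mem_graph,
    MulEquiv.coe_toMonoidHom, MulAut.conj_inv_apply, conj_inv_eq_iff_inv_mul_mul_eq]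

theorem mem_conj_smul_iff {x : G} : x ∈ MulAut.conj δ • B ↔ δ⁻¹ * x * δ ∈ B := by
  rw [Subgroup.mem_pointwise_smul_iff_inv_smul_mem, MulAut.smul_def, MulAut.conj_inv_apply]

/-- The first projection, as an isomorphism from the twisted stabilizer onto `A ⊓ δ B δ⁻¹`. -/
def twistedStabilizerEquivInfConj (A B : Subgroup G) (δ : G) :
    twistedStabilizer A B δ ≃* (A ⊓ MulAut.conj δ • B : Subgroup G) where
  toFun p := ⟨p.1.1, by
    obtain ⟨⟨hA, hB⟩, h⟩ := mem_twistedStabilizer.1 p.2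
    exact ⟨hA, mem_conj_smul_iff.2 (conj_inv_eq_iff_inv_mul_mul_eq.2 h ▸ hB)⟩⟩
  invFun x := ⟨(x, δ⁻¹ * x * δ), mem_twistedStabilizer.2
    ⟨⟨x.2.1, mem_conj_smul_iff.1 x.2.2⟩, conj_inv_eq_iff_inv_mul_mul_eq.1 rfl⟩⟩
  left_inv p := Subtype.ext <| Prod.ext rfl <|
    conj_inv_eq_iff_inv_mul_mul_eq.2 (mem_twistedStabilizer.1 p.2).2
  right_inv _ := rfl
  map_mul' _ _ := rfl

end TwistedStabilizer

section FixedSubgroup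

variable {H : Type*} [Group H] {σ : H →* H}

/-- The subgroup `H^σ` of fixed points of an endomorphism `σ` of `H`. -/
def fixedSubgroup (σ : H →* H) : Subgroup H :=
  σ.eqLocus (MonoidHom.id H)

theorem mem_fixedSubgroup {h : H} : h ∈ fixedSubgroup σ ↔ σ h = h :=
  Iff.rfl

theorem map_conj_eq_conj_map_iff (hσ : Function.Injective σ) {δ ε g₁ g₂ : H} (hg₂ : σ g₂ = g₂) :
    σ (δ⁻¹ * g₁ * δ) = (σ ε)⁻¹ * g₂ * σ ε ↔ g₁⁻¹ * (δ * ε⁻¹) * g₂ = δ * ε⁻¹ := by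
  have map_conj : (σ ε)⁻¹ * g₂ * σ ε = σ (ε⁻¹ * g₂ * ε) := by
    simp only [map_mul, map_inv, hg₂]
  rw [map_conj, hσ.eq_iff, conj_inv_eq_iff_inv_mul_mul_eq, eq_mul_inv_iff_mul_eq]
  simp only [mul_assoc]

theorem prod_fixedSubgroup_inf_conj_graph (hσ : Function.Injective σ) (δ ε : H) :
    (fixedSubgroup σ).prod (fixedSubgroup σ) ⊓ MulAut.conj (δ, σ ε) • σ.graph =
      twistedStabilizer (fixedSubgroup σ) (fixedSubgroup σ) (δ * ε⁻¹) := by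
  ext ⟨g₁, g₂⟩
  rw [Subgroup.mem_inf, mem_twistedStabilizer, mem_conj_smul_iff, Subgroup.mem_prod]
  exact and_congr_right fun hg => map_conj_eq_conj_map_iff hσ hg.2

end FixedSubgroup

theorem stmt5_general {H : Type*} [Group H] (σ : H →* H) (hσ : Function.Injective σ)
    (δ₁ : H) {δ₂ ε : H} (hε : σ ε = δ₂) :
    ∃ (S : Subgroup ((H × H) × (H × H))) (T : Subgroup (H × H)),
      (∀ p : (H × H) × (H × H), p ∈ S ↔
        (σ p.1.1 = p.1.1 ∧ σ p.1.2 = p.1.2) ∧ (p.2.2 = σ p.2.1) ∧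
        p.1.1⁻¹ * δ₁ * p.2.1 = δ₁ ∧ p.1.2⁻¹ * δ₂ * p.2.2 = δ₂) ∧
      (∀ q : H × H, q ∈ T ↔ σ q.1 = q.1 ∧ σ q.2 = q.2 ∧
        q.1⁻¹ * (δ₁ * ε⁻¹) * q.2 = δ₁ * ε⁻¹) ∧
      ∃ e : S ≃* T, ∀ p : S, (e p : H × H) = (p : (H × H) × (H × H)).1 := by
  subst hε
  let F := fixedSubgroup σ
  refine ⟨twistedStabilizer (F.prod F) σ.graph (δ₁, σ ε), twistedStabilizer F F (δ₁ * ε⁻¹),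
    fun p => ?_, fun q => ?_, ?_⟩
  · simp only [F, mem_twistedStabilizer, Subgroup.mem_prod, mem_fixedSubgroup,
      MonoidHom.mem_graph, Prod.ext_iff, Prod.fst_mul, Prod.snd_mul, Prod.fst_inv, Prod.snd_inv,
      and_assoc, eq_comm (a := p.2.2)]
  · simp only [F, mem_twistedStabilizer, mem_fixedSubgroup, and_assoc]
  · exact ⟨(twistedStabilizerEquivInfConj _ _ _).trans
      (MulEquiv.subgroupCongr (prod_fixedSubgroup_inf_conj_graph hσ δ₁ ε)), fun _ => rfl⟩

/-- with `G = H × H`, `σ_G(x,y) = (σ x, σ y)`, `θ(x,y) = (σ y, σ x)`,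
and `γ := δ₁ σ(δ₂)⁻¹`, the set `G_{(δ₁,δ₂)}` is a subgroup, its elements have the
form `((g₁,g₂),(g₃,σ g₃))`, and `((g₁,g₂),(g₃,σ g₃)) ↦ (g₁,g₂)` is a group
isomorphism onto `H_γ`. -/
theorem stmt5 {H : Type*} [Group H] (σ : H ≃* H) (hσ : ∀ h, σ (σ h) = h) (δ₁ δ₂ : H) :
    ∃ (S : Subgroup ((H × H) × (H × H))) (T : Subgroup (H × H)),
      (∀ p : (H × H) × (H × H), p ∈ S ↔
        (σ p.1.1 = p.1.1 ∧ σ p.1.2 = p.1.2) ∧ (p.2.2 = σ p.2.1) ∧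
        p.1.1⁻¹ * δ₁ * p.2.1 = δ₁ ∧ p.1.2⁻¹ * δ₂ * p.2.2 = δ₂) ∧
      (∀ q : H × H, q ∈ T ↔ σ q.1 = q.1 ∧ σ q.2 = q.2 ∧
        q.1⁻¹ * (δ₁ * (σ δ₂)⁻¹) * q.2 = δ₁ * (σ δ₂)⁻¹) ∧
      ∃ e : S ≃* T, ∀ p : S, (e p : H × H) = (p : (H × H) × (H × H)).1 :=
  stmt5_general (σ : H →* H) σ.injective δ₁ (hσ δ₂)
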